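/- (Triangle counting.) Let H' ≤ H ≤ G = 𝔽₂ⁿ be subgroups, g₁, g₂, g₃ ∈ G with g₁+g₂+g₃ = 0, and z₁ ∈ H. For any sets A, B, C ⊆ G, the number of triples (a,b,c) with a ∈ A ∩ (H'+g₁+z₁), b ∈ B ∩ (H+g₂), c ∈ C ∩ (H+g₃), and a+b+c = 0, equals |H|·|H'|·∑_{α,η} Â_{H'}^{g₁+z₁}(α)·B̂_H^{g₂}(α+η)·Ĉ_H^{g₃}(α+η)·(-1)^{⟨α+η, z₁⟩}, where α ranges over characters of H' (i.e. representatives η ∈ 𝔽₂ⁿ of distinct restrictions of ⟨·,α⟩ to H') and η ranges over characters of H that are trivial on H'. -/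

import Mathlib

open scoped Classical BigOperators

noncomputable section

/-- The group `G = 𝔽₂ⁿ`. -/
abbrev G (n : ℕ) : Type := Fin n → ZMod 2

/-- The coset `H + g` (note that `-g = g` in `𝔽₂ⁿ`). -/
def coset {n : ℕ} (H : AddSubgroup (G n)) (g : G n) : Set (G n) := {x | x + g ∈ H}

/-- The entropy function `f(x) = x log x` (with `f 0 = 0`). -/
def ent (x : ℝ) : ℝ := x * Real.log x

/-- The density of `A` on the coset `H + g`. -/
def dens {n : ℕ} (A : Set (G n)) (H : AddSubgroup (G n)) (g : G n) : ℝ :=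
  (Nat.card ↥(A ∩ coset H g) : ℝ) / (Nat.card ↥H : ℝ)

/-- Mean entropy `F_A(G, H)` of partitioning `G` into cosets of `H`. -/
def meanEntG {n : ℕ} (A : Set (G n)) (H : AddSubgroup (G n)) : ℝ :=
  (∑ g : G n, ent (dens A H g)) / (Fintype.card (G n) : ℝ)

/-- Mean entropy `F_A(H + g, H')` of partitioning the coset `H + g` into cosets of `H'`. -/
def meanEntCoset {n : ℕ} (A : Set (G n)) (H H' : AddSubgroup (G n)) (g : G n) : ℝ :=
  (∑ g₁ : ↥H, ent (dens A H' (g + ↑g₁))) / (Nat.card ↥H : ℝ)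

/-- The standard bilinear form on `𝔽₂ⁿ`. -/
def dotp {n : ℕ} (x y : G n) : ZMod 2 := ∑ i, x i * y i

/-- The character value `(-1)^{⟨x, y⟩}`. -/
def chi {n : ℕ} (x y : G n) : ℝ := if dotp x y = 0 then 1 else -1

/-- Fourier coefficient `f̂_H^g(η) = E_{x ∈ H} [f(x + g) · (-1)^{⟨x, η⟩}]`. -/
def fCoeff {n : ℕ} (H : AddSubgroup (G n)) (g : G n) (f : G n → ℝ) (η : G n) : ℝ :=
  (∑ x : ↥H, f (↑x + g) * chi ↑x η) / (Nat.card ↥H : ℝ)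

/-- `f` is `ρ`-superregular on `H + g`: every Fourier coefficient at a character that is
nontrivial on `H` is at most `ρ` times the zeroth coefficient in absolute value. -/
def SuperregularOn {n : ℕ} (H : AddSubgroup (G n)) (g : G n) (ρ : ℝ) (f : G n → ℝ) : Prop :=
  ∀ η : G n, (∃ x ∈ H, dotp x η ≠ 0) →
    |fCoeff H g f η| ≤ ρ * fCoeff H g f 0

/-- `H'` `(α, β, k)`-shatters `A` on `H + g`. -/
def Shatters {n : ℕ} (H' H : AddSubgroup (G n)) (A : Set (G n)) (g : G n)
    (α β k : ℝ) : Prop :=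
  (Nat.card ↥H : ℝ) / (Nat.card ↥H' : ℝ) ≤ (2 : ℝ) ^ k ∧
  α ≤ (Nat.card {g' : ↥H //
        (Nat.card ↥(A ∩ coset H' (g + ↑g')) : ℝ) ≤ β * dens A H g * (Nat.card ↥H' : ℝ)} : ℝ) /
      (Nat.card ↥H : ℝ)

/-- Number of triangles `(a, b, c)`, `a + b + c = 0`, with `a ∈ S₁`, `b ∈ S₂`, `c ∈ S₃`. -/
def triBetween {n : ℕ} (S₁ S₂ S₃ : Set (G n)) : ℕ :=
  Nat.card {p : G n × G n × G n // p.1 ∈ S₁ ∧ p.2.1 ∈ S₂ ∧ p.2.2 ∈ S₃ ∧ p.1 + p.2.1 + p.2.2 = 0}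

/-- Number of triangles in `A`. -/
def triCount {n : ℕ} (A : Set (G n)) : ℕ := triBetween A A A

/-- The annihilator of `K`: characters trivial on `K`. -/
def ann {n : ℕ} (K : AddSubgroup (G n)) : AddSubgroup (G n) where
  carrier := {η | ∀ x ∈ K, dotp x η = 0}
  zero_mem' := by intro x _; simp [dotp]
  add_mem' := by
    intro a b ha hb x hx
    have h : dotp x (a + b) = dotp x a + dotp x b := by
      simp [dotp, mul_add, Finset.sum_add_distrib]
    rw [h, ha x hx, hb x hx, add_zero]
  neg_mem' := by
    intro a ha x hx
    have h : dotp x (-a) = -dotp x a := by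
      simp [dotp]
    rw [h, ha x hx, neg_zero]

/-- Average of `f` over the coset `v + H'`. -/
def fbar {n : ℕ} (H' : AddSubgroup (G n)) (f : G n → ℝ) (v : G n) : ℝ :=
  (∑ y : ↥H', f (v + ↑y)) / (Nat.card ↥H' : ℝ)

/-- Tower function: `tower 0 = 1`, `tower (i+1) = 2 ^ tower i`. -/
def tower : ℕ → ℕ
  | 0 => 1
  | k + 1 => 2 ^ tower k

/-- `A` is `ε`-far from triangle-free: at least `ε N` elements must be removed from `A`
to destroy all triangles. -/
def FarFromTriangleFree {n : ℕ} (A : Set (G n)) (ε : ℝ) : Prop :=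
  ∀ B ⊆ A, (∀ x ∈ B, ∀ y ∈ B, ∀ z ∈ B, x + y + z ≠ 0) →
    ε * 2 ^ n ≤ (Nat.card ↥(A \ B) : ℝ)

/-- The set of elements of a triangle. -/
def elems {n : ℕ} (p : G n × G n × G n) : Set (G n) := {p.1, p.2.1, p.2.2}

/-!
Extending `f` by zero from the coset `H + g` to all of `𝔽₂ⁿ` turns `fCoeff H g f` into the Fourier
transform on `𝔽₂ⁿ`, up to the factor `|H|⁻¹` and the phase `chi g`. Orthogonality of characters
evaluates the sum over all `η` of a product of three transforms as a sum over triangles. The phases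
of the three cosets multiply to `chi (g₁ + g₂ + g₃)`, which is what the factor `chi · z` cancels.
Finally, `fCoeff H₁` is invariant under `ann H₁`, so the additional sum over `η ∈ ann H₁` is
removed by translating the sum over `α`, at the cost of a factor `|ann H₁|`.
-/

section Characters

variable {n : ℕ}

lemma dotp_comm (x y : G n) : dotp x y = dotp y x := by
  simp only [dotp, mul_comm]

lemma dotp_add_left (x y η : G n) : dotp (x + y) η = dotp x η + dotp y η := by
  simp only [dotp, Pi.add_apply, add_mul, Finset.sum_add_distrib]

lemma forall_dotp_eq_zero_iff {x : G n} : (∀ η, dotp η x = 0) ↔ x = 0 := by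
  refine ⟨fun h => funext fun i => ?_, by rintro rfl; simp [dotp]⟩
  simpa [dotp, Pi.single_apply] using h (Pi.single i 1)

lemma chi_comm (x y : G n) : chi x y = chi y x := by
  simp only [chi, dotp_comm x y]

lemma chi_eq_one_iff {x η : G n} : chi x η = 1 ↔ dotp x η = 0 := by
  by_cases h : dotp x η = 0 <;> norm_num [chi, h]

lemma chi_zero_left (η : G n) : chi 0 η = 1 := by
  simp [chi, dotp]

lemma chi_add_left (x y η : G n) : chi (x + y) η = chi x η * chi y η := by
  have sign_add : ∀ a b : ZMod 2, (if a + b = 0 then 1 else -1 : ℤ) =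
      (if a = 0 then 1 else -1) * (if b = 0 then 1 else -1) := by decide
  simp only [chi, dotp_add_left]
  exact_mod_cast sign_add (dotp x η) (dotp y η)

lemma chi_mul_self (x η : G n) : chi x η * chi x η = 1 := by
  rw [← chi_add_left, ZModModule.add_self, chi_zero_left]

/-- The function `chi · η` as an additive character of `𝔽₂ⁿ`, the form to which
`AddChar.sum_eq_ite` applies. -/
def chiAddChar (η : G n) : AddChar (G n) ℝ where
  toFun x := chi x η
  map_zero_eq_one' := chi_zero_left η
  map_add_eq_mul' x y := chi_add_left x y η

lemma chiAddChar_apply (η x : G n) : chiAddChar η x = chi x η := rfl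

lemma chiAddChar_eq_zero_iff {η : G n} : chiAddChar η = 0 ↔ η = 0 := by
  rw [← forall_dotp_eq_zero_iff, DFunLike.ext_iff]
  exact forall_congr' fun x => chi_eq_one_iff

lemma sum_chi (x : G n) : ∑ η, chi x η = if x = 0 then (Fintype.card (G n) : ℝ) else 0 := by
  simpa only [chiAddChar_apply, chi_comm x, chiAddChar_eq_zero_iff] using
    AddChar.sum_eq_ite (chiAddChar x)

lemma compAddMonoidHom_chiAddChar_eq_zero_iff {H : AddSubgroup (G n)} {η : G n} :
    (chiAddChar η).compAddMonoidHom H.subtype = 0 ↔ η ∈ ann H := by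
  rw [DFunLike.ext_iff, Subtype.forall]
  exact forall₂_congr fun x _ => chi_eq_one_iff

lemma sum_chi_subgroup (H : AddSubgroup (G n)) (η : G n) :
    ∑ x : H, chi (x : G n) η = if η ∈ ann H then (Nat.card H : ℝ) else 0 := by
  rw [Nat.card_eq_fintype_card]
  simpa only [AddChar.compAddMonoidHom_apply, chiAddChar_apply, AddSubgroup.subtype_apply,
    compAddMonoidHom_chiAddChar_eq_zero_iff] using
    AddChar.sum_eq_ite ((chiAddChar η).compAddMonoidHom H.subtype)

-- Both sides evaluate the double sum of `chi x η` over `x ∈ H` and all `η`.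
lemma card_mul_card_ann (H : AddSubgroup (G n)) :
    (Nat.card H : ℝ) * Nat.card (ann H) = Fintype.card (G n) := by
  calc (Nat.card H : ℝ) * Nat.card (ann H)
      = ∑ η : G n, ∑ x : H, chi (x : G n) η := by
        simp only [sum_chi_subgroup]
        rw [← Finset.sum_filter, Finset.sum_const, nsmul_eq_mul, mul_comm,
          Nat.card_eq_fintype_card (α := ann H), Fintype.card_subtype]
    _ = ∑ x : H, ∑ η : G n, chi (x : G n) η := Finset.sum_comm
    _ = Fintype.card (G n) := by
        simp only [sum_chi, ZeroMemClass.coe_eq_zero, Finset.sum_ite_eq', Finset.mem_univ, if_true]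

end Characters

section Fourier

variable {n : ℕ}

/-- The unnormalised Fourier transform of `f` on the whole of `𝔽₂ⁿ`. Taken without `fCoeff`'s
division by the cardinality, so that transforms of functions supported on cosets of different
subgroups multiply without constants. -/
def fourierSum (f : G n → ℝ) (η : G n) : ℝ := ∑ a, f a * chi a η

lemma fourierSum_mul_fourierSum_mul_fourierSum (f₁ f₂ f₃ : G n → ℝ) (η : G n) :
    fourierSum f₁ η * fourierSum f₂ η * fourierSum f₃ η =
      ∑ p : G n × G n × G n,
        f₁ p.1 * f₂ p.2.1 * f₃ p.2.2 * chi (p.1 + p.2.1 + p.2.2) η := by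
  simp only [fourierSum, chi_add_left]
  rw [mul_assoc, Finset.sum_mul_sum, ← Fintype.sum_prod_type', Finset.sum_mul_sum,
    ← Fintype.sum_prod_type']
  exact Finset.sum_congr rfl fun p _ => by ring

lemma sum_fourierSum_mul_fourierSum_mul_fourierSum (f₁ f₂ f₃ : G n → ℝ) :
    ∑ η, fourierSum f₁ η * fourierSum f₂ η * fourierSum f₃ η =
      Fintype.card (G n) *
        ∑ p : G n × G n × G n with p.1 + p.2.1 + p.2.2 = 0, f₁ p.1 * f₂ p.2.1 * f₃ p.2.2 := by
  simp only [fourierSum_mul_fourierSum_mul_fourierSum]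
  rw [Finset.sum_comm, Finset.sum_filter, Finset.mul_sum]
  refine Finset.sum_congr rfl fun p _ => ?_
  rw [← Finset.mul_sum, sum_chi, mul_ite, mul_ite, mul_zero, mul_zero, mul_comm]

lemma triBetween_eq_sum_indicator (S T U : Set (G n)) :
    (triBetween S T U : ℝ) =
      ∑ p : G n × G n × G n with p.1 + p.2.1 + p.2.2 = 0,
        S.indicator 1 p.1 * T.indicator 1 p.2.1 * U.indicator 1 p.2.2 := by
  rw [triBetween, Nat.card_eq_fintype_card, Fintype.card_subtype, Finset.card_filter,
    Nat.cast_sum, Finset.sum_filter]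
  refine Finset.sum_congr rfl fun p _ => ?_
  simp only [Set.indicator_apply, Pi.one_apply, Nat.cast_ite, Nat.cast_one, Nat.cast_zero]
  split_ifs <;> simp_all

lemma sum_indicator_coset {M : Type*} [AddCommMonoid M] (H : AddSubgroup (G n)) (g : G n)
    (f : G n → M) :
    ∑ a, (coset H g).indicator f a = ∑ x : H, f (x + g) := by
  have mem_coset (x : G n) : x + g ∈ coset H g ↔ x ∈ H := by
    rw [coset, Set.mem_ofPred_eq, add_assoc, ZModModule.add_self, add_zero]
  rw [← Equiv.sum_comp (Equiv.addRight g)]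
  simp only [Equiv.coe_addRight, Set.indicator_apply, mem_coset]
  rw [← Finset.sum_filter]
  exact Finset.sum_subtype _ (by simp) _

lemma fCoeff_eq_fourierSum (H : AddSubgroup (G n)) (g : G n) (f : G n → ℝ) (η : G n) :
    fCoeff H g f η = chi g η * fourierSum ((coset H g).indicator f) η / Nat.card H := by
  have sum_eq := sum_indicator_coset H g fun a => f a * chi a η
  simp only [Set.indicator_mul_left] at sum_eq
  rw [fCoeff, fourierSum, sum_eq, Finset.mul_sum]
  congr 1
  refine Finset.sum_congr rfl fun x _ => ?_
  rw [chi_add_left]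
  linear_combination (-(f (x + g) * chi x η)) * chi_mul_self g η

lemma fCoeff_add_of_mem_ann {H : AddSubgroup (G n)} {η : G n} (hη : η ∈ ann H) (g : G n)
    (f : G n → ℝ) (α : G n) : fCoeff H g f (α + η) = fCoeff H g f α := by
  have chi_add (x : H) : chi (x : G n) (α + η) = chi (x : G n) α := by
    rw [chi_comm, chi_add_left, chi_comm η, chi_eq_one_iff.2 (hη x x.2), mul_one, chi_comm]
  simp only [fCoeff, chi_add]

lemma sum_sum_ann_fCoeff_mul (H : AddSubgroup (G n)) (g : G n) (f F : G n → ℝ) :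
    ∑ α, ∑ η : ann H, fCoeff H g f α * F (α + η) =
      Nat.card (ann H) * ∑ α, fCoeff H g f α * F α := by
  have sum_translate (η : ann H) :
      ∑ α, fCoeff H g f α * F (α + η) = ∑ α, fCoeff H g f α * F α := by
    rw [← Equiv.sum_comp (Equiv.addRight (η : G n)) fun α => fCoeff H g f α * F α]
    simp only [Equiv.coe_addRight, fCoeff_add_of_mem_ann η.2]
  rw [Finset.sum_comm, Finset.sum_congr rfl fun η _ => sum_translate η, Finset.sum_const,
    nsmul_eq_mul, Finset.card_univ, Nat.card_eq_fintype_card]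

lemma fCoeff_mul_fCoeff_mul_fCoeff_mul_chi (H₁ H₂ H₃ : AddSubgroup (G n)) {g₁ g₂ g₃ z : G n}
    (hg : g₁ + g₂ + g₃ = z) (f₁ f₂ f₃ : G n → ℝ) (α : G n) :
    fCoeff H₁ g₁ f₁ α * fCoeff H₂ g₂ f₂ α * fCoeff H₃ g₃ f₃ α * chi α z =
      fourierSum ((coset H₁ g₁).indicator f₁) α * fourierSum ((coset H₂ g₂).indicator f₂) α *
        fourierSum ((coset H₃ g₃).indicator f₃) α /
          (Nat.card H₁ * Nat.card H₂ * Nat.card H₃) := by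
  have phases_cancel : chi g₁ α * chi g₂ α * chi g₃ α * chi α z = 1 := by
    rw [← chi_add_left, ← chi_add_left, hg, chi_comm α, chi_mul_self]
  simp only [fCoeff_eq_fourierSum]
  rw [div_mul_div_comm, div_mul_div_comm, div_mul_eq_mul_div]
  congr 1
  linear_combination (fourierSum ((coset H₁ g₁).indicator f₁) α *
    fourierSum ((coset H₂ g₂).indicator f₂) α *
    fourierSum ((coset H₃ g₃).indicator f₃) α) * phases_cancel

lemma sum_fCoeff_mul_fCoeff_mul_fCoeff_mul_chi (H₁ H₂ H₃ : AddSubgroup (G n))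
    {g₁ g₂ g₃ z : G n} (hg : g₁ + g₂ + g₃ = z) (A B C : Set (G n)) :
    ∑ α, fCoeff H₁ g₁ (A.indicator 1) α * fCoeff H₂ g₂ (B.indicator 1) α *
        fCoeff H₃ g₃ (C.indicator 1) α * chi α z =
      Fintype.card (G n) *
          triBetween (A ∩ coset H₁ g₁) (B ∩ coset H₂ g₂) (C ∩ coset H₃ g₃) /
        (Nat.card H₁ * Nat.card H₂ * Nat.card H₃) := by
  simp only [fCoeff_mul_fCoeff_mul_fCoeff_mul_chi H₁ H₂ H₃ hg, Set.indicator_indicator,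
    Set.inter_comm (coset _ _)]
  rw [← Finset.sum_div, sum_fourierSum_mul_fourierSum_mul_fourierSum, triBetween_eq_sum_indicator]

end Fourier

-- The constant is `|H₁| |H₂| |H₃| / (|ann H₁| 2ⁿ)`, rewritten using `|H₃| |ann H₃| = 2ⁿ`.
theorem triangle_counting_general {n : ℕ} (H₁ H₂ H₃ : AddSubgroup (G n))
    {g₁ g₂ g₃ z : G n} (hg : g₁ + g₂ + g₃ = z) (A B C : Set (G n)) :
    (triBetween (A ∩ coset H₁ g₁) (B ∩ coset H₂ g₂) (C ∩ coset H₃ g₃) : ℝ)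
      = (Nat.card H₂ : ℝ) * (Nat.card H₁ : ℝ)
          / ((Nat.card (ann H₁) : ℝ) * (Nat.card (ann H₃) : ℝ)) *
        ∑ α : G n, ∑ η : ann H₁,
          fCoeff H₁ g₁ (Set.indicator A 1) α *
          fCoeff H₂ g₂ (Set.indicator B 1) (α + (η : G n)) *
          fCoeff H₃ g₃ (Set.indicator C 1) (α + (η : G n)) *
          chi (α + (η : G n)) z := by
  have card_ne_zero (K : AddSubgroup (G n)) : (Nat.card K : ℝ) ≠ 0 :=
    Nat.cast_ne_zero.2 Nat.card_pos.ne'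
  have sum_over_ann := sum_sum_ann_fCoeff_mul H₁ g₁ (A.indicator 1) fun β =>
    fCoeff H₂ g₂ (B.indicator 1) β * fCoeff H₃ g₃ (C.indicator 1) β * chi β z
  simp only [← mul_assoc] at sum_over_ann
  rw [sum_over_ann, sum_fCoeff_mul_fCoeff_mul_fCoeff_mul_chi H₁ H₂ H₃ hg, ← card_mul_card_ann H₃]
  field_simp [card_ne_zero]

theorem triangle_counting {n : ℕ} (H' H : AddSubgroup (G n)) (hle : H' ≤ H)
    (g₁ g₂ g₃ : G n) (hg : g₁ + g₂ + g₃ = 0) (z₁ : G n) (hz : z₁ ∈ H)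
    (A B C : Set (G n)) :
    (triBetween (A ∩ coset H' (g₁ + z₁)) (B ∩ coset H g₂) (C ∩ coset H g₃) : ℝ)
      = (Nat.card ↥H : ℝ) * (Nat.card ↥H' : ℝ)
          / ((Nat.card ↥(ann H') : ℝ) * (Nat.card ↥(ann H) : ℝ)) *
        ∑ α : G n, ∑ η : ↥(ann H'),
          fCoeff H' (g₁ + z₁) (Set.indicator A 1) α *
          fCoeff H g₂ (Set.indicator B 1) (α + (η : G n)) *
          fCoeff H g₃ (Set.indicator C 1) (α + (η : G n)) *
          chi (α + (η : G n)) z₁ :=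
  triangle_counting_general H' H H (by linear_combination hg) A B C
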